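/- Assume the sub-critical range q > 1 and (2/3)q + 1 < p < q + 2/3, and let M < ∞. Let A_M be the set of all injective, arc-length parametrized curves γ ∈ C¹(ℝ/ℤ,ℝⁿ) with E_{p,q}(γ) ≤ M. Then A_M is sequentially compact in C¹ up to translations: for every sequence (γ_k) ⊂ A_M there exist a subsequence (γ_{k_j}), points b_j ∈ ℝⁿ, and a curve γ₀ ∈ A_M such that γ_{k_j} − b_j converges to γ₀ in C¹(ℝ/ℤ,ℝⁿ). -/

import Mathlib

open MeasureTheory Set Filter Topology
open scoped ENNReal

noncomputable section

/-- The area `|a ∧ b|` of the parallelogram spanned by `a, b ∈ ℝⁿ`. -/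
def wedgeNorm {n : ℕ} (a b : EuclideanSpace ℝ (Fin n)) : ℝ :=
  Real.sqrt (‖a‖ ^ 2 * ‖b‖ ^ 2 - (inner ℝ a b : ℝ) ^ 2)

/-- `1 / R^{p,q}(x,y,z) = |(y-x) ∧ (z-x)|^q / (|y-z| |y-x| |z-x|)^p`. -/
def invR {n : ℕ} (p q : ℝ) (x y z : EuclideanSpace ℝ (Fin n)) : ℝ :=
  wedgeNorm (y - x) (z - x) ^ q / (‖y - z‖ * ‖y - x‖ * ‖z - x‖) ^ p

/-- The generalized integral Menger curvature `E_{p,q}` of a closed curve,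
modelled by a `1`-periodic function together with its derivative,
the parameter domain `ℝ/ℤ` being represented by `[0,1)`; values in `[0,∞]`. -/
def menger {n : ℕ} (p q : ℝ) (γ γ' : ℝ → EuclideanSpace ℝ (Fin n)) : ℝ≥0∞ :=
  ∫⁻ u₁ in Ico (0:ℝ) 1, ∫⁻ u₂ in Ico (0:ℝ) 1, ∫⁻ u₃ in Ico (0:ℝ) 1,
    ENNReal.ofReal (‖γ' u₁‖ * ‖γ' u₂‖ * ‖γ' u₃‖ * invR p q (γ u₁) (γ u₂) (γ u₃))

/-- Injectivity of a `1`-periodic curve as a map on `ℝ/ℤ`. -/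
def InjCircle {n : ℕ} (γ : ℝ → EuclideanSpace ℝ (Fin n)) : Prop :=
  ∀ u v : ℝ, γ u = γ v → ∃ k : ℤ, v = u + k

/-- Distance on `ℝ/ℤ`. -/
def circleDist (u v : ℝ) : ℝ := ⨅ k : ℤ, |u - v - (k : ℝ)|

/-- The `ρ`-th power of the Sobolev–Slobodeckiĭ seminorm `[f]_{W^{1+s,ρ}}`
of a periodic function with derivative `f'`; values in `[0,∞]`. -/
def sobSemiPow {n : ℕ} (s ρ : ℝ) (f' : ℝ → EuclideanSpace ℝ (Fin n)) : ℝ≥0∞ :=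
  ∫⁻ u in Ico (0:ℝ) 1, ∫⁻ w in Icc (-(1/2) : ℝ) (1/2),
    ENNReal.ofReal (‖f' (u + w) - f' u‖ ^ ρ / |w| ^ (1 + ρ * s))

/-- The norm `‖f‖_{W^{1+s,ρ}} = ‖f‖_{W^{1,ρ}} + [f]_{W^{1+s,ρ}}`. -/
def sobNorm {n : ℕ} (s ρ : ℝ) (f f' : ℝ → EuclideanSpace ℝ (Fin n)) : ℝ :=
  (∫ u in Ico (0:ℝ) 1, ‖f u‖ ^ ρ) ^ (1/ρ) + (∫ u in Ico (0:ℝ) 1, ‖f' u‖ ^ ρ) ^ (1/ρ)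
    + (sobSemiPow s ρ f').toReal ^ (1/ρ)

/-- `γ` is a closed `W^{1,1}` curve with weak derivative `γ'`:
both are `1`-periodic, `γ'` is measurable and `γ` is the primitive of `γ'`. -/
structure CurvePair {n : ℕ} (γ γ' : ℝ → EuclideanSpace ℝ (Fin n)) : Prop where
  periodic : Function.Periodic γ 1
  periodic' : Function.Periodic γ' 1
  meas' : Measurable γ'
  primitive : ∀ u, γ u = γ 0 + ∫ t in (0:ℝ)..u, γ' t

/-- Membership in the set `A_M` of injective arc-length parametrized `C¹`
closed curves of energy at most `M`. -/
def InAM {n : ℕ} (p q M : ℝ) (γ : ℝ → EuclideanSpace ℝ (Fin n)) : Prop :=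
  ContDiff ℝ 1 γ ∧ Function.Periodic γ 1 ∧ InjCircle γ ∧
    (∀ u, ‖deriv γ u‖ = 1) ∧ menger p q γ (deriv γ) ≤ ENNReal.ofReal M

section Wedge

variable {n : ℕ}

lemma wedgeNorm_nonneg (a b : EuclideanSpace ℝ (Fin n)) : 0 ≤ wedgeNorm a b :=
  Real.sqrt_nonneg _

lemma wedgeNorm_sq (a b : EuclideanSpace ℝ (Fin n)) :
    wedgeNorm a b ^ 2 = ‖a‖ ^ 2 * ‖b‖ ^ 2 - (inner ℝ a b : ℝ) ^ 2 := by
  refine Real.sq_sqrt ?_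
  have h := abs_real_inner_le_norm a b
  have h2 := sq_le_sq' (by linarith [neg_abs_le (inner ℝ a b : ℝ), abs_nonneg (inner ℝ a b : ℝ)])
    ((le_abs_self _).trans h)
  nlinarith

lemma wedgeNorm_comm (a b : EuclideanSpace ℝ (Fin n)) : wedgeNorm a b = wedgeNorm b a := by
  simp only [wedgeNorm, real_inner_comm a b, mul_comm]

lemma wedgeNorm_le (a b : EuclideanSpace ℝ (Fin n)) : wedgeNorm a b ≤ ‖a‖ * ‖b‖ := by
  refine Real.sqrt_le_iff.2 ⟨by positivity, ?_⟩
  nlinarith [sq_nonneg (inner ℝ a b : ℝ)]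

lemma wedgeNorm_eq_norm (a b : EuclideanSpace ℝ (Fin n)) :
    wedgeNorm a b = ‖‖a‖ • b - ((inner ℝ a b : ℝ) / ‖a‖) • a‖ := by
  refine (pow_left_inj₀ (wedgeNorm_nonneg _ _) (norm_nonneg _) two_ne_zero).1 ?_
  rw [wedgeNorm_sq, norm_sub_sq_real, norm_smul, norm_smul, real_inner_smul_left,
    real_inner_smul_right, real_inner_comm]
  rcases eq_or_ne a 0 with rfl | ha
  · simp
  have : ‖a‖ ≠ 0 := norm_ne_zero_iff.2 ha
  simp only [norm_div, Real.norm_eq_abs, mul_pow, div_pow, sq_abs]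
  field_simp
  ring

lemma wedgeNorm_add_right_le (a b c : EuclideanSpace ℝ (Fin n)) :
    wedgeNorm a (b + c) ≤ wedgeNorm a b + wedgeNorm a c := by
  simp only [wedgeNorm_eq_norm]
  refine le_trans (le_of_eq ?_) (norm_add_le _ _)
  rw [inner_add_right, add_div]
  congr 1
  module

lemma wedgeNorm_smul_right (a b : EuclideanSpace ℝ (Fin n)) (c : ℝ) :
    wedgeNorm a (c • b) = |c| * wedgeNorm a b := by
  rw [wedgeNorm_eq_norm, wedgeNorm_eq_norm, ← Real.norm_eq_abs, ← norm_smul,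
    real_inner_smul_right]
  congr 1
  module

lemma wedgeNorm_smul_left (a b : EuclideanSpace ℝ (Fin n)) (c : ℝ) :
    wedgeNorm (c • a) b = |c| * wedgeNorm a b := by
  rw [wedgeNorm_comm, wedgeNorm_smul_right, wedgeNorm_comm]

@[simp] lemma wedgeNorm_self (a : EuclideanSpace ℝ (Fin n)) : wedgeNorm a a = 0 := by
  rw [wedgeNorm, real_inner_self_eq_norm_sq, ← sq, sub_self, Real.sqrt_zero]

@[simp] lemma wedgeNorm_zero_left (a : EuclideanSpace ℝ (Fin n)) : wedgeNorm 0 a = 0 := by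
  simp [wedgeNorm]

@[simp] lemma wedgeNorm_zero_right (a : EuclideanSpace ℝ (Fin n)) : wedgeNorm a 0 = 0 := by
  simp [wedgeNorm]

/-- The parallelogram area is Lipschitz on bounded sets. -/
lemma wedgeNorm_le_add (a b a' b' : EuclideanSpace ℝ (Fin n)) :
    wedgeNorm a b ≤ wedgeNorm a' b' + ‖a - a'‖ * ‖b'‖ + ‖a‖ * ‖b - b'‖ := by
  have h1 := wedgeNorm_add_right_le a b' (b - b')
  have h2 := wedgeNorm_add_right_le b' a' (a - a')
  rw [add_sub_cancel] at h1 h2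
  rw [wedgeNorm_comm b' a, wedgeNorm_comm b' a', wedgeNorm_comm b'] at h2
  linarith [wedgeNorm_le a (b - b'), wedgeNorm_le (a - a') b']

/-- Two unit vectors enclosing an acute angle are close if they span a small area. -/
lemma norm_sub_le_of_unit {a b : EuclideanSpace ℝ (Fin n)} (ha : ‖a‖ = 1) (hb : ‖b‖ = 1)
    (hab : 0 ≤ (inner ℝ a b : ℝ)) : ‖a - b‖ ≤ 3 / 2 * wedgeNorm a b := by
  have hw := wedgeNorm_nonneg a b
  refine (pow_le_pow_iff_left₀ (norm_nonneg _) (by positivity) two_ne_zero).1 ?_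
  rw [mul_pow, wedgeNorm_sq, norm_sub_sq_real, ha, hb]
  have hc : (inner ℝ a b : ℝ) ≤ 1 := by simpa [ha, hb] using real_inner_le_norm a b
  nlinarith

lemma continuous_wedgeNorm :
    Continuous fun x : EuclideanSpace ℝ (Fin n) × EuclideanSpace ℝ (Fin n) =>
      wedgeNorm x.1 x.2 := by
  unfold wedgeNorm
  fun_prop

end Wedge

section Energy

variable {n : ℕ}

/-- The integral of a `1`-periodic function over a period does not depend on the period. -/
lemma setLIntegral_Ico_periodic {f : ℝ → ℝ≥0∞} (hf : Function.Periodic f 1) (a : ℝ) :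
    ∫⁻ u in Ico (0:ℝ) 1, f u = ∫⁻ u in Ico a (a + 1), f u := by
  rw [setLIntegral_congr Ico_ae_eq_Ioc, setLIntegral_congr (Ico_ae_eq_Ioc (a := a))]
  have h := (isAddFundamentalDomain_Ioc one_pos 0 volume).setLIntegral_eq
    (isAddFundamentalDomain_Ioc one_pos a volume) f hf.map_vadd_zmultiples
  simpa using h

/-- A lower bound of a periodic function on a short interval bounds its integral. -/
lemma le_setLIntegral_Ico_of_periodic {f : ℝ → ℝ≥0∞} (hf : Function.Periodic f 1) {a h : ℝ}
    (h1 : h ≤ 1) {c : ℝ≥0∞} (hc : ∀ u ∈ Ico a (a + h), c ≤ f u) :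
    c * ENNReal.ofReal h ≤ ∫⁻ u in Ico (0:ℝ) 1, f u := by
  rw [setLIntegral_Ico_periodic hf a]
  calc c * ENNReal.ofReal h = ∫⁻ _ in Ico a (a + h), c := by simp
    _ ≤ ∫⁻ u in Ico a (a + h), f u := setLIntegral_mono' measurableSet_Ico hc
    _ ≤ _ := lintegral_mono_set (Ico_subset_Ico_right (by linarith))

lemma invR_ge {p q r m : ℝ} (hp : 0 < p) (hq : 0 < q) (hm : 0 < m)
    {x y z : EuclideanSpace ℝ (Fin n)} (hw : m ≤ wedgeNorm (y - x) (z - x))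
    (hyz : ‖y - z‖ ≤ r) (hyx : ‖y - x‖ ≤ r) (hzx : ‖z - x‖ ≤ r) :
    m ^ q / (r ^ 3) ^ p ≤ invR p q x y z := by
  have hyx0 : 0 < ‖y - x‖ := by
    refine norm_pos_iff.2 fun h => ?_
    rw [h, wedgeNorm_zero_left] at hw; linarith
  have hzx0 : 0 < ‖z - x‖ := by
    refine norm_pos_iff.2 fun h => ?_
    rw [h, wedgeNorm_zero_right] at hw; linarith
  have hyz0 : 0 < ‖y - z‖ := by
    refine norm_pos_iff.2 fun h => ?_
    rw [sub_eq_zero.1 h, wedgeNorm_self] at hw; linarith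
  have hr : 0 < r := hyx0.trans_le hyx
  have hw0 := Real.rpow_nonneg (wedgeNorm_nonneg (y - x) (z - x)) q
  unfold invR
  have : ‖y - z‖ * ‖y - x‖ * ‖z - x‖ ≤ r ^ 3 := by
    rw [pow_three']
    gcongr
  gcongr

/-- The energy controls the area spanned by every triple of points of the curve. -/
lemma wedgeNorm_pow_le {p q M r : ℝ} (hp : 0 < p) (hq : 0 < q)
    {γ : ℝ → EuclideanSpace ℝ (Fin n)} (hper : Function.Periodic γ 1)
    (hlip : ∀ u v, ‖γ u - γ v‖ ≤ |u - v|) (hunit : ∀ u, ‖deriv γ u‖ = 1)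
    (hE : menger p q γ (deriv γ) ≤ ENNReal.ofReal M) (hr : 0 < r) (hr1 : r ≤ 1) {u v w : ℝ}
    (hvw : ‖γ v - γ w‖ ≤ r) (hvu : ‖γ v - γ u‖ ≤ r) (hwu : ‖γ w - γ u‖ ≤ r) :
    wedgeNorm (γ v - γ u) (γ w - γ u) ^ (q + 3) ≤
      (16 ^ 3 * 2 ^ q * 8 ^ p * (|M| + 1)) * r ^ (3 * p + 3) := by
  set m := wedgeNorm (γ v - γ u) (γ w - γ u) with hmdef
  rcases (wedgeNorm_nonneg (γ v - γ u) (γ w - γ u)).eq_or_lt with h0 | hm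
  · rw [hmdef, ← h0, Real.zero_rpow (by positivity)]
    positivity
  rw [← hmdef] at hm
  have hmr : m ≤ r * r := (wedgeNorm_le _ _).trans (by gcongr)
  set h := m / (16 * r) with hh
  have hhr : h ≤ r / 16 := by
    rw [hh, div_le_iff₀ (by positivity)]; linarith
  have hhpos : 0 < h := by positivity
  have hmh : m = 16 * r * h := by rw [hh]; field_simp
  set c := (m / 2) ^ q / ((2 * r) ^ 3) ^ p with hc
  have hcpos : 0 < c := by positivity
  have key : ∀ u₁ ∈ Ico u (u + h), ∀ u₂ ∈ Ico v (v + h), ∀ u₃ ∈ Ico w (w + h),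
      c ≤ invR p q (γ u₁) (γ u₂) (γ u₃) := by
    intro u₁ h₁ u₂ h₂ u₃ h₃
    have e₁ : ‖γ u₁ - γ u‖ ≤ h :=
      (hlip _ _).trans (abs_le.2 ⟨by linarith [h₁.1], by linarith [h₁.2]⟩)
    have e₂ : ‖γ u₂ - γ v‖ ≤ h :=
      (hlip _ _).trans (abs_le.2 ⟨by linarith [h₂.1], by linarith [h₂.2]⟩)
    have e₃ : ‖γ u₃ - γ w‖ ≤ h :=
      (hlip _ _).trans (abs_le.2 ⟨by linarith [h₃.1], by linarith [h₃.2]⟩)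
    have d : ∀ {a b a' b' : EuclideanSpace ℝ (Fin n)}, ‖a' - a‖ ≤ h → ‖b' - b‖ ≤ h →
        ‖(a - b) - (a' - b')‖ ≤ 2 * h := by
      intro a b a' b' ha hb
      calc ‖(a - b) - (a' - b')‖ = ‖(b' - b) - (a' - a)‖ := by congr 1; abel
        _ ≤ ‖b' - b‖ + ‖a' - a‖ := norm_sub_le _ _
        _ ≤ 2 * h := by linarith
    have d' : ∀ {a b a' b' : EuclideanSpace ℝ (Fin n)}, ‖a' - a‖ ≤ h → ‖b' - b‖ ≤ h →
        ‖a - b‖ ≤ r → ‖a' - b'‖ ≤ 2 * r := by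
      intro a b a' b' ha hb hab
      have := norm_sub_norm_le (a' - b') (a - b)
      rw [norm_sub_rev _ (a - b)] at this
      linarith [d ha hb]
    refine invR_ge hp hq (by positivity) ?_ (d' e₂ e₃ hvw) (d' e₂ e₁ hvu) (d' e₃ e₁ hwu)
    have := wedgeNorm_le_add (γ v - γ u) (γ w - γ u) (γ u₂ - γ u₁) (γ u₃ - γ u₁)
    rw [← hmdef] at this
    have t₁ : ‖γ v - γ u - (γ u₂ - γ u₁)‖ * ‖γ u₃ - γ u₁‖ ≤ (2 * h) * (2 * r) := by
      gcongr
      exacts [d e₂ e₁, d' e₃ e₁ hwu]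
    have t₂ : ‖γ v - γ u‖ * ‖γ w - γ u - (γ u₃ - γ u₁)‖ ≤ r * (2 * h) := by
      gcongr
      exact d e₃ e₁
    nlinarith
  have hle : ENNReal.ofReal c * ENNReal.ofReal h * ENNReal.ofReal h * ENNReal.ofReal h ≤
      ENNReal.ofReal M := by
    refine le_trans ?_ hE
    have hh1 : h ≤ 1 := by linarith
    simp only [menger, hunit, one_mul]
    refine le_setLIntegral_Ico_of_periodic (a := u) (fun x => by simp [hper x]) hh1 fun u₁ h₁ => ?_
    refine le_setLIntegral_Ico_of_periodic (a := v) (fun x => by simp [hper x]) hh1 fun u₂ h₂ => ?_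
    refine le_setLIntegral_Ico_of_periodic (a := w) (fun x => by simp [hper x]) hh1 fun u₃ h₃ => ?_
    exact ENNReal.ofReal_le_ofReal (key u₁ h₁ u₂ h₂ u₃ h₃)
  have hreal : c * h ^ 3 ≤ |M| + 1 := by
    rw [← ENNReal.ofReal_mul hcpos.le, ← ENNReal.ofReal_mul (by positivity),
      ← ENNReal.ofReal_mul (by positivity)] at hle
    have hpos : 0 < c * h * h * h := by positivity
    have := (ENNReal.ofReal_le_ofReal_iff' .. ).1 hle
    rcases this with h' | h'
    · calc c * h ^ 3 = c * h * h * h := by ring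
        _ ≤ |M| + 1 := by linarith [le_abs_self M]
    · linarith
  have e1 : m ^ (q + 3) = m ^ q * m ^ 3 := by
    rw [Real.rpow_add hm]; norm_cast
  have e2 : r ^ (3 * p + 3) = (r ^ 3) ^ p * r ^ 3 := by
    rw [Real.rpow_add hr, Real.rpow_mul hr.le]; norm_cast
  have e3 : c * h ^ 3 = m ^ q * m ^ 3 / (2 ^ q * 8 ^ p * 16 ^ 3 * ((r ^ 3) ^ p * r ^ 3)) := by
    rw [hc, hh, Real.div_rpow hm.le (by norm_num), mul_pow,
      Real.mul_rpow (by positivity) (by positivity)]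
    norm_num
    field_simp
    norm_num
  rw [e1, e2]
  rw [e3, div_le_iff₀ (by positivity)] at hreal
  linarith

end Energy

section Tangent

variable {n : ℕ}

lemma periodic_deriv {γ : ℝ → EuclideanSpace ℝ (Fin n)} (hper : Function.Periodic γ 1) :
    Function.Periodic (deriv γ) 1 := fun x => by
  rw [← deriv_comp_add_const]; congr 1; exact funext hper

lemma eq_fract_of_periodic {f : ℝ → EuclideanSpace ℝ (Fin n)} (hper : Function.Periodic f 1)
    (u : ℝ) : f u = f (Int.fract u) := by
  have := hper.int_mul ⌊u⌋ (Int.fract u)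
  rwa [mul_one, Int.fract_add_floor] at this

/-- Triples of points of `γ` of diameter at most `r ≤ 1` span an area of at most `B r ^ (2 + α)`. -/
def AreaBound (B α : ℝ) (γ : ℝ → EuclideanSpace ℝ (Fin n)) : Prop :=
  ∀ u v w r : ℝ, 0 < r → r ≤ 1 → ‖γ v - γ w‖ ≤ r → ‖γ v - γ u‖ ≤ r → ‖γ w - γ u‖ ≤ r →
    wedgeNorm (γ v - γ u) (γ w - γ u) ≤ B * r ^ (2 + α)

lemma norm_sub_le_abs_of_unit {γ : ℝ → EuclideanSpace ℝ (Fin n)} (hγ : ContDiff ℝ 1 γ)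
    (hunit : ∀ u, ‖deriv γ u‖ = 1) (u v : ℝ) : ‖γ u - γ v‖ ≤ |u - v| := by
  have h : LipschitzWith 1 γ := lipschitzWith_of_nnnorm_deriv_le (hγ.differentiable one_ne_zero)
    fun x => NNReal.coe_le_coe.1 (by simp [hunit x])
  simpa [dist_eq_norm] using h.dist_le_mul u v

lemma exists_areaBound {p q : ℝ} (M : ℝ) (hq : 1 < q) (hp : 2/3 * q + 1 < p) :
    ∃ B α : ℝ, 0 < B ∧ 0 < α ∧ ∀ γ : ℝ → EuclideanSpace ℝ (Fin n), InAM p q M γ →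
      AreaBound B α γ := by
  have hp0 : 0 < p := by linarith
  set K : ℝ := 16 ^ 3 * 2 ^ q * 8 ^ p * (|M| + 1) with hK
  have hKpos : 0 < K := by positivity
  refine ⟨K ^ (1 / (q + 3)), (3 * p - 2 * q - 3) / (q + 3), by positivity,
    div_pos (by linarith) (by linarith), ?_⟩
  rintro γ ⟨hC, hper, -, hunit, hE⟩ u v w r hr hr1 hvw hvu hwu
  have h := wedgeNorm_pow_le hp0 (by linarith) hper (norm_sub_le_abs_of_unit hC hunit) hunit hE
    hr hr1 hvw hvu hwu
  rw [← hK] at h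
  have hq3 : 0 < q + 3 := by linarith
  have h' := Real.rpow_le_rpow (by have := wedgeNorm_nonneg (γ v - γ u) (γ w - γ u); positivity) h
    (by positivity : 0 ≤ 1 / (q + 3))
  rw [← Real.rpow_mul (wedgeNorm_nonneg _ _), mul_one_div_cancel hq3.ne', Real.rpow_one,
    Real.mul_rpow hKpos.le (by positivity), ← Real.rpow_mul hr.le] at h'
  convert h' using 3
  field_simp
  ring

lemma norm_chord_sub_le {γ : ℝ → EuclideanSpace ℝ (Fin n)} (hγ : ContDiff ℝ 1 γ) {u r ε : ℝ}
    (h : ∀ t, |t| ≤ r → ‖deriv γ (u + t) - deriv γ u‖ ≤ ε) {s : ℝ} (hs : |s| ≤ r) :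
    ‖γ (u + s) - γ u - s • deriv γ u‖ ≤ ε * |s| := by
  have hd : ∀ t, HasDerivAt (fun t => γ (u + t) - t • deriv γ u)
      (deriv γ (u + t) - deriv γ u) t := fun t => by
    have h1 := ((hγ.differentiable one_ne_zero) (u + t)).hasDerivAt.comp_const_add u t
    simpa using h1.fun_sub ((hasDerivAt_id t).smul_const (deriv γ u))
  have hr : 0 ≤ r := (abs_nonneg s).trans hs
  have := (convex_Icc (-r) r).norm_image_sub_le_of_norm_hasDerivWithin_le
    (fun t _ => (hd t).hasDerivWithinAt) (fun t ht => h t (abs_le.2 ht))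
    (show (0:ℝ) ∈ Icc (-r) r from ⟨by linarith, hr⟩) (show s ∈ Icc (-r) r from abs_le.1 hs)
  simpa [sub_right_comm] using this

lemma norm_normalize_sub_le {e a b : EuclideanSpace ℝ (Fin n)} (he : ‖e‖ = 1)
    (ha : ‖a - e‖ ≤ 1 / 4) (hb : ‖b - e‖ ≤ 1 / 4) :
    ‖‖a‖⁻¹ • a - ‖b‖⁻¹ • b‖ ≤ 3 * wedgeNorm a b := by
  have hna : 3 / 4 ≤ ‖a‖ := by
    have := norm_sub_norm_le e a
    rw [norm_sub_rev] at this; linarith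
  have hnb : 3 / 4 ≤ ‖b‖ := by
    have := norm_sub_norm_le e b
    rw [norm_sub_rev] at this; linarith
  have ha0 : 0 < ‖a‖ := by linarith
  have hb0 : 0 < ‖b‖ := by linarith
  have hab : 0 ≤ (inner ℝ a b : ℝ) := by
    have h : (inner ℝ a b : ℝ) =
        (inner ℝ (a - e) (b - e) : ℝ) + inner ℝ (a - e) e + inner ℝ e (b - e) + 1 := by
      simp only [inner_sub_left, inner_sub_right, real_inner_self_eq_norm_sq, he]
      ring
    have h1 := neg_le_of_abs_le (abs_real_inner_le_norm (a - e) (b - e))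
    have h2 := neg_le_of_abs_le (abs_real_inner_le_norm (a - e) e)
    have h3 := neg_le_of_abs_le (abs_real_inner_le_norm e (b - e))
    have h4 : ‖a - e‖ * ‖b - e‖ ≤ 1 / 4 * (1 / 4) := by gcongr
    rw [he] at h2 h3
    linarith
  have h := norm_sub_le_of_unit (a := ‖a‖⁻¹ • a) (b := ‖b‖⁻¹ • b)
    (by rw [norm_smul, norm_inv, norm_norm, inv_mul_cancel₀ ha0.ne'])
    (by rw [norm_smul, norm_inv, norm_norm, inv_mul_cancel₀ hb0.ne'])
    (by rw [real_inner_smul_left, real_inner_smul_right]; positivity)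
  refine h.trans ?_
  rw [wedgeNorm_smul_left, wedgeNorm_smul_right, abs_of_pos (inv_pos.2 ha0),
    abs_of_pos (inv_pos.2 hb0)]
  have h1 : ‖a‖⁻¹ ≤ (3 / 4)⁻¹ := by gcongr
  have h2 : ‖b‖⁻¹ ≤ (3 / 4)⁻¹ := by gcongr
  have hw := wedgeNorm_nonneg a b
  calc 3 / 2 * (‖a‖⁻¹ * (‖b‖⁻¹ * wedgeNorm a b))
      ≤ 3 / 2 * ((3 / 4)⁻¹ * ((3 / 4)⁻¹ * wedgeNorm a b)) := by gcongr
    _ ≤ 3 * wedgeNorm a b := by linarith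

/-- The unit chord direction at `u` is Hölder close to the tangent, provided that the tangent does
not oscillate too much. -/
lemma norm_chord_dir_sub_deriv_le {B α r : ℝ} (hα : 0 < α)
    {γ : ℝ → EuclideanSpace ℝ (Fin n)} (hγ : ContDiff ℝ 1 γ) (hunit : ∀ u, ‖deriv γ u‖ = 1)
    (hA : AreaBound B α γ) (hr1 : r ≤ 1) {u : ℝ}
    (hosc : ∀ t, |t| ≤ r → ‖deriv γ (u + t) - deriv γ u‖ ≤ 1 / 4) {s : ℝ} (hs0 : s ≠ 0)
    (hs : |s| ≤ r) :
    ‖‖s⁻¹ • (γ (u + s) - γ u)‖⁻¹ • (s⁻¹ • (γ (u + s) - γ u)) - deriv γ u‖ ≤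
      6 * B / (1 - (1 / 2) ^ α) * |s| ^ α := by
  set T : ℝ → EuclideanSpace ℝ (Fin n) := fun t => t⁻¹ • (γ (u + t) - γ u) with hT
  have hlip := norm_sub_le_abs_of_unit hγ hunit
  have hTd : ∀ t, t ≠ 0 → |t| ≤ r → ‖T t - deriv γ u‖ ≤ 1 / 4 := by
    intro t ht htr
    have h := norm_chord_sub_le hγ hosc htr
    have : T t - deriv γ u = t⁻¹ • (γ (u + t) - γ u - t • deriv γ u) := by
      rw [hT, smul_sub _ _ (t • _), inv_smul_smul₀ ht]
    have ht0 := abs_pos.2 ht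
    rw [this, norm_smul, norm_inv, Real.norm_eq_abs, inv_mul_le_iff₀ ht0]
    linarith
  have hW : ∀ t, t ≠ 0 → |t| ≤ r → wedgeNorm (T t) (T (t / 2)) ≤ 2 * B * |t| ^ α := by
    intro t ht htr
    have ht0 := abs_pos.2 ht
    have h := hA u (u + t) (u + t / 2) |t| ht0 (htr.trans hr1)
      ((hlip _ _).trans (by
        rw [show u + t - (u + t / 2) = t / 2 by ring, abs_div, abs_two]; linarith))
      ((hlip _ _).trans (by simp))
      ((hlip _ _).trans (by
        rw [show u + t / 2 - u = t / 2 by ring, abs_div, abs_two]; linarith))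
    rw [hT, wedgeNorm_smul_left, wedgeNorm_smul_right, abs_inv, abs_inv, abs_div, abs_two]
    rw [Real.rpow_add ht0, Real.rpow_two] at h
    calc |t|⁻¹ * ((|t| / 2)⁻¹ * wedgeNorm (γ (u + t) - γ u) (γ (u + t / 2) - γ u))
        ≤ |t|⁻¹ * ((|t| / 2)⁻¹ * (B * (|t| ^ 2 * |t| ^ α))) := by gcongr
      _ = 2 * B * |t| ^ α := by field_simp
  set f : ℕ → EuclideanSpace ℝ (Fin n) := fun j => ‖T (s / 2 ^ j)‖⁻¹ • T (s / 2 ^ j) with hf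
  have hne : ∀ j : ℕ, s / 2 ^ j ≠ 0 := fun j => by positivity
  have hle : ∀ j : ℕ, |s / 2 ^ j| ≤ r := fun j => by
    refine le_trans ?_ hs
    rw [abs_div, abs_of_pos (by positivity : (0:ℝ) < 2 ^ j)]
    exact div_le_self (abs_nonneg _) (one_le_pow₀ one_le_two)
  have hdist : ∀ j, dist (f j) (f (j + 1)) ≤ 6 * B * |s| ^ α * ((1 / 2) ^ α) ^ j := by
    intro j
    rw [dist_eq_norm]
    refine (norm_normalize_sub_le (hunit u) (hTd _ (hne j) (hle j))
      (hTd _ (hne (j + 1)) (hle (j + 1)))).trans ?_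
    have h := hW _ (hne j) (hle j)
    rw [div_div, ← pow_succ] at h
    have e : |s / 2 ^ j| ^ α = |s| ^ α * ((1 / 2) ^ α) ^ j := by
      rw [abs_div, abs_of_pos (by positivity : (0:ℝ) < 2 ^ j), div_eq_mul_one_div,
        Real.mul_rpow (abs_nonneg _) (by positivity), ← one_div_pow, ← Real.rpow_natCast,
        ← Real.rpow_natCast, ← Real.rpow_mul (by norm_num), ← Real.rpow_mul (by norm_num),
        mul_comm α]
    rw [e] at h
    linarith
  have hlim : Tendsto f atTop (𝓝 (deriv γ u)) := by
    have h1 : Tendsto T (𝓝[≠] 0) (𝓝 (deriv γ u)) :=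
      hasDerivAt_iff_tendsto_slope_zero.1 ((hγ.differentiable one_ne_zero) u).hasDerivAt
    have h2 : Tendsto (fun j : ℕ => s / 2 ^ j) atTop (𝓝[≠] 0) := by
      refine tendsto_nhdsWithin_iff.2 ⟨?_, Eventually.of_forall hne⟩
      have := (tendsto_pow_atTop_nhds_zero_of_lt_one (r := (1/2 : ℝ)) (by norm_num)
        (by norm_num)).const_mul s
      simpa [div_eq_mul_inv] using this
    have h3 := h1.comp h2
    have h4 := (h3.norm.inv₀ (by rw [hunit]; exact one_ne_zero)).smul h3
    simpa [hunit] using h4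
  have hlt : (1 / 2 : ℝ) ^ α < 1 := Real.rpow_lt_one (by norm_num) (by norm_num) hα
  have h := dist_le_of_le_geometric_of_tendsto₀ _ _ hlt hdist hlim
  rw [dist_eq_norm] at h
  convert h using 1
  · simp [hf, hT]
  · ring

lemma norm_deriv_sub_le_of_osc {B α r : ℝ} (hα : 0 < α)
    {γ : ℝ → EuclideanSpace ℝ (Fin n)} (hγ : ContDiff ℝ 1 γ) (hunit : ∀ u, ‖deriv γ u‖ = 1)
    (hA : AreaBound B α γ) (hr1 : r ≤ 1)
    (hosc : ∀ u t, |t| ≤ r → ‖deriv γ (u + t) - deriv γ u‖ ≤ 1 / 4) {u s : ℝ} (hs : |s| ≤ r) :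
    ‖deriv γ (u + s) - deriv γ u‖ ≤ 12 * B / (1 - (1 / 2) ^ α) * |s| ^ α := by
  rcases eq_or_ne s 0 with rfl | hs0
  · simp [Real.zero_rpow hα.ne']
  have h1 := norm_chord_dir_sub_deriv_le hα hγ hunit hA hr1 (hosc u) hs0 hs
  have h2 := norm_chord_dir_sub_deriv_le hα hγ hunit hA hr1 (hosc (u + s)) (neg_ne_zero.2 hs0)
    (by rwa [abs_neg])
  have e : (-s)⁻¹ • (γ (u + s + -s) - γ (u + s)) = s⁻¹ • (γ (u + s) - γ u) := by
    rw [add_neg_cancel_right, inv_neg, neg_smul, ← smul_neg, neg_sub]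
  rw [e, abs_neg] at h2
  set τ := ‖s⁻¹ • (γ (u + s) - γ u)‖⁻¹ • (s⁻¹ • (γ (u + s) - γ u))
  calc ‖deriv γ (u + s) - deriv γ u‖ = ‖(τ - deriv γ u) - (τ - deriv γ (u + s))‖ := by
        congr 1; abel
    _ ≤ _ := norm_sub_le _ _
    _ ≤ _ := add_le_add h1 h2
    _ = _ := by ring

/-- An area bound yields a uniform Hölder estimate for the tangent at a uniform scale. -/
lemma exists_holder_deriv {B α : ℝ} (hB : 0 < B) (hα : 0 < α) :
    ∃ r C : ℝ, 0 < r ∧ r ≤ 1 / 4 ∧ 0 < C ∧ ∀ γ : ℝ → EuclideanSpace ℝ (Fin n), ContDiff ℝ 1 γ →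
      Function.Periodic γ 1 → (∀ u, ‖deriv γ u‖ = 1) → AreaBound B α γ →
      ∀ u s, |s| ≤ r → ‖deriv γ (u + s) - deriv γ u‖ ≤ C * |s| ^ α ∧
        ‖deriv γ (u + s) - deriv γ u‖ ≤ 1 / 8 := by
  have hlt : (1 / 2 : ℝ) ^ α < 1 := Real.rpow_lt_one (by norm_num) (by norm_num) hα
  set C := 12 * B / (1 - (1 / 2) ^ α) with hC
  have hCpos : 0 < C := div_pos (by positivity) (by linarith)
  obtain ⟨r, hr, hrsmall⟩ : ∃ r : ℝ, 0 < r ∧ r ≤ 1 / 4 ∧ C * r ^ α ≤ 1 / 8 := by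
    have h : Tendsto (fun r : ℝ => C * r ^ α) (𝓝[>] 0) (𝓝 0) := by
      have := ((Real.continuousAt_rpow_const 0 α (Or.inr hα.le)).tendsto.const_mul C)
      rw [Real.zero_rpow hα.ne', mul_zero] at this
      exact this.mono_left nhdsWithin_le_nhds
    have h1 := h.eventually (Iic_mem_nhds (show (0:ℝ) < 1 / 8 by norm_num))
    have h2 : ∀ᶠ r : ℝ in 𝓝[>] 0, r ≤ 1 / 4 :=
      nhdsWithin_le_nhds (Iic_mem_nhds (by norm_num))
    obtain ⟨r, h1, h2, h3⟩ := (h1.and (h2.and self_mem_nhdsWithin)).exists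
    exact ⟨r, h3, h2, h1⟩
  refine ⟨r, C, hr, hrsmall.1, hCpos, fun γ hγ hper hunit hA => ?_⟩
  have step : ∀ r', r' ≤ r → (∀ u t, |t| ≤ r' → ‖deriv γ (u + t) - deriv γ u‖ ≤ 1 / 4) →
      ∀ u t, |t| ≤ r' → ‖deriv γ (u + t) - deriv γ u‖ ≤ C * |t| ^ α ∧
        ‖deriv γ (u + t) - deriv γ u‖ ≤ 1 / 8 := by
    intro r' hr' hosc u t ht
    have h := norm_deriv_sub_le_of_osc hα hγ hunit hA (by linarith [hrsmall.1]) hosc (u := u) ht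
    refine ⟨h, h.trans (le_trans ?_ hrsmall.2)⟩
    gcongr
    exact ht.trans hr'
  obtain ⟨δ, hδ, hδosc⟩ : ∃ δ : ℝ, 0 < δ ∧
      ∀ u t, |t| ≤ δ → ‖deriv γ (u + t) - deriv γ u‖ ≤ 1 / 8 := by
    have hper' := periodic_deriv hper
    have hcont : Continuous (deriv γ) := hγ.continuous_deriv le_rfl
    have huc : UniformContinuousOn (deriv γ) (Icc (-1) 2) :=
      isCompact_Icc.uniformContinuousOn_of_continuous hcont.continuousOn
    obtain ⟨δ, hδ, h⟩ := Metric.uniformContinuousOn_iff.1 huc (1 / 8) (by norm_num)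
    refine ⟨min (δ / 2) 1, by positivity, fun u t ht => ?_⟩
    have ht1 : |t| ≤ 1 := ht.trans (min_le_right _ _)
    have htδ : |t| < δ := lt_of_le_of_lt (ht.trans (min_le_left _ _)) (by linarith)
    have hf0 := Int.fract_nonneg u
    have hf1 := (Int.fract_lt_one u).le
    have e2 : deriv γ (u + t) = deriv γ (Int.fract u + t) := by
      have := hper'.int_mul ⌊u⌋ (Int.fract u + t)
      rwa [mul_one, add_right_comm, Int.fract_add_floor] at this
    rw [eq_fract_of_periodic hper' u, e2, ← dist_eq_norm]
    rw [abs_le] at ht1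
    refine (h _ ⟨by linarith, by linarith⟩ _ ⟨by linarith, by linarith⟩ ?_).le
    simpa [Real.dist_eq] using htδ
  have ind : ∀ k : ℕ, ∀ u t, |t| ≤ min r (k * δ) → ‖deriv γ (u + t) - deriv γ u‖ ≤ 1 / 4 := by
    intro k
    induction k with
    | zero =>
      intro u t ht
      have : t = 0 := abs_nonpos_iff.1 (ht.trans (by simp))
      simp [this]
    | succ k ih =>
      intro u t ht
      have ht1 := ht.trans (min_le_left _ _)
      have ht2 := ht.trans (min_le_right _ _)
      push_cast at ht2
      obtain ⟨t', h1, h2⟩ : ∃ t', |t'| ≤ min r (k * δ) ∧ |t - t'| ≤ δ := by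
        have hk : 0 ≤ k * δ := by positivity
        rcases le_or_gt |t| (k * δ) with h | h
        · exact ⟨t, le_min ht1 h, by simpa using hδ.le⟩
        · have hm : min r (k * δ) = k * δ := min_eq_right (h.le.trans ht1)
          rw [hm]
          rcases abs_cases t with ⟨e, -⟩ | ⟨e, -⟩ <;> rw [e] at h ht2
          · exact ⟨k * δ, (abs_of_nonneg hk).le, abs_le.2 ⟨by linarith, by linarith⟩⟩
          · exact ⟨-(k * δ), by rw [abs_neg, abs_of_nonneg hk],
              abs_le.2 ⟨by linarith, by linarith⟩⟩
      have h3 := (step _ (min_le_left _ _) ih u t' h1).2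
      have h4 := hδosc (u + t') (t - t') h2
      rw [add_add_sub_cancel] at h4
      calc ‖deriv γ (u + t) - deriv γ u‖
          ≤ _ := norm_sub_le_norm_sub_add_norm_sub _ (deriv γ (u + t')) _
        _ ≤ 1 / 4 := by linarith
  obtain ⟨k, hk⟩ := exists_nat_ge (r / δ)
  rw [div_le_iff₀ hδ] at hk
  have hfin := ind k
  rw [min_eq_left hk] at hfin
  exact step r le_rfl hfin

end Tangent

section Separation

variable {n : ℕ}

lemma le_norm_chord {γ : ℝ → EuclideanSpace ℝ (Fin n)} (hγ : ContDiff ℝ 1 γ)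
    (hunit : ∀ u, ‖deriv γ u‖ = 1) {r : ℝ}
    (hosc : ∀ u s, |s| ≤ r → ‖deriv γ (u + s) - deriv γ u‖ ≤ 1 / 8) (u : ℝ) {s : ℝ}
    (hs : |s| ≤ r) : 7 / 8 * |s| ≤ ‖γ (u + s) - γ u‖ := by
  have h := norm_chord_sub_le hγ (hosc u) hs
  have h' := norm_sub_norm_le (s • deriv γ u) (γ (u + s) - γ u)
  rw [norm_sub_rev _ (γ (u + s) - γ u), norm_smul, hunit, mul_one, Real.norm_eq_abs] at h'
  linarith

/-- At a point where the distance to another point of the curve is critical, the area bound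
prevents this distance from being small. -/
lemma le_of_inner_eq_zero {B α r : ℝ} {γ : ℝ → EuclideanSpace ℝ (Fin n)} (hγ : ContDiff ℝ 1 γ)
    (hunit : ∀ u, ‖deriv γ u‖ = 1) (hA : AreaBound B α γ) (hr : r ≤ 1 / 4)
    (hosc : ∀ u s, |s| ≤ r → ‖deriv γ (u + s) - deriv γ u‖ ≤ 1 / 8) {u v δ : ℝ}
    (hδ : ‖γ v - γ u‖ = δ) (hδ0 : 0 < δ) (hδr : δ ≤ r)
    (hcrit : (inner ℝ (γ v - γ u) (deriv γ v) : ℝ) = 0) :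
    7 / 8 ≤ 4 * B * (2 * δ) ^ α := by
  have hlip := norm_sub_le_abs_of_unit hγ hunit (v + δ) v
  have hchord := norm_chord_sub_le hγ (hosc v) (s := δ) (by rwa [abs_of_pos hδ0])
  rw [add_sub_cancel_left, abs_of_pos hδ0] at hlip
  rw [abs_of_pos hδ0] at hchord
  have h := hA u v (v + δ) (2 * δ) (by positivity) (by linarith)
    (by rw [norm_sub_rev]; linarith) (by linarith)
    ((norm_sub_le_norm_sub_add_norm_sub _ (γ v) _).trans (by linarith))
  have e : wedgeNorm (γ v - γ u) (δ • deriv γ v) = δ * δ := by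
    rw [wedgeNorm_smul_right, wedgeNorm, hcrit, hunit, hδ, abs_of_pos hδ0]
    simp [hδ0.le]
  have h1 := wedgeNorm_add_right_le (γ v - γ u) (γ (v + δ) - γ u)
    ((-1 : ℝ) • (γ v - γ u) + (δ • deriv γ v - (γ (v + δ) - γ v)))
  have h2 := wedgeNorm_add_right_le (γ v - γ u) ((-1 : ℝ) • (γ v - γ u))
    (δ • deriv γ v - (γ (v + δ) - γ v))
  have h3 := wedgeNorm_le (γ v - γ u) (δ • deriv γ v - (γ (v + δ) - γ v))
  rw [show γ (v + δ) - γ u + ((-1 : ℝ) • (γ v - γ u) + (δ • deriv γ v - (γ (v + δ) - γ v)))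
    = δ • deriv γ v by module, e] at h1
  rw [wedgeNorm_smul_right, wedgeNorm_self] at h2
  rw [hδ, norm_sub_rev] at h3
  rw [Real.rpow_add (by positivity), Real.rpow_two] at h
  have h4 : δ * ‖γ (v + δ) - γ v - δ • deriv γ v‖ ≤ δ * (1 / 8 * δ) := by gcongr
  have h5 : 7 / 8 * (δ * δ) ≤ 4 * B * (2 * δ) ^ α * (δ * δ) := by linarith
  exact le_of_mul_le_mul_right h5 (by positivity)

/-- Injective curves with an area bound have uniformly separated strands. -/
lemma exists_separation {B α r : ℝ} (hB : 0 < B) (hα : 0 < α) (hr0 : 0 < r) (hr : r ≤ 1 / 4) :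
    ∃ δ₀ : ℝ, 0 < δ₀ ∧ ∀ γ : ℝ → EuclideanSpace ℝ (Fin n), ContDiff ℝ 1 γ →
      Function.Periodic γ 1 → InjCircle γ → (∀ u, ‖deriv γ u‖ = 1) → AreaBound B α γ →
      (∀ u s, |s| ≤ r → ‖deriv γ (u + s) - deriv γ u‖ ≤ 1 / 8) →
      ∀ u s, r ≤ s → s ≤ 1 - r → δ₀ ≤ ‖γ (u + s) - γ u‖ := by
  obtain ⟨δ₀, hδ₀, hδr, hδB⟩ : ∃ δ : ℝ, 0 < δ ∧ δ ≤ r / 2 ∧ 4 * B * (2 * δ) ^ α ≤ 1 / 2 := by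
    have h : Tendsto (fun r : ℝ => 4 * B * (2 * r) ^ α) (𝓝[>] 0) (𝓝 0) := by
      have hc : Continuous fun r : ℝ => 4 * B * (2 * r) ^ α :=
        continuous_const.mul ((continuous_const.mul continuous_id).rpow_const
          fun _ => Or.inr hα.le)
      have := hc.tendsto 0
      simp only [mul_zero, Real.zero_rpow hα.ne'] at this
      exact this.mono_left nhdsWithin_le_nhds
    have h1 := h.eventually (Iic_mem_nhds (show (0:ℝ) < 1 / 2 by norm_num))
    have h2 : ∀ᶠ δ : ℝ in 𝓝[>] 0, δ ≤ r / 2 := nhdsWithin_le_nhds (Iic_mem_nhds (by positivity))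
    obtain ⟨δ, h1, h2, h3⟩ := (h1.and (h2.and self_mem_nhdsWithin)).exists
    exact ⟨δ, h3, h2, h1⟩
  refine ⟨δ₀, hδ₀, fun γ hγ hper hinj hunit hA hosc u' s' hs1' hs2' => ?_⟩
  by_contra! hlt
  have hcomp : IsCompact (Icc (0:ℝ) 1 ×ˢ Icc r (1 - r)) := isCompact_Icc.prod isCompact_Icc
  have hcont : Continuous fun x : ℝ × ℝ => ‖γ (x.1 + x.2) - γ x.1‖ := by
    have := hγ.continuous
    fun_prop
  obtain ⟨⟨u, s⟩, ⟨-, hs⟩, hmin⟩ := hcomp.exists_isMinOn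
    ⟨(0, r), ⟨by simp, by simp; linarith⟩⟩ hcont.continuousOn
  have hmin' : ∀ u₁ s₁, s₁ ∈ Icc r (1 - r) → ‖γ (u + s) - γ u‖ ≤ ‖γ (u₁ + s₁) - γ u₁‖ := by
    intro u₁ s₁ hs₁
    have h := hmin (show (Int.fract u₁, s₁) ∈ Icc (0:ℝ) 1 ×ˢ Icc r (1 - r) from
      ⟨⟨Int.fract_nonneg _, (Int.fract_lt_one _).le⟩, hs₁⟩)
    have e2 : γ (u₁ + s₁) = γ (Int.fract u₁ + s₁) := by
      have := hper.int_mul ⌊u₁⌋ (Int.fract u₁ + s₁)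
      rwa [mul_one, add_right_comm, Int.fract_add_floor] at this
    rw [eq_fract_of_periodic hper u₁, e2]
    exact h
  set δ := ‖γ (u + s) - γ u‖ with hδ
  have hδlt : δ < δ₀ := (hmin' u' s' ⟨hs1', hs2'⟩).trans_lt hlt
  have hδ0 : 0 < δ := by
    refine norm_pos_iff.2 fun h => ?_
    obtain ⟨k, hk⟩ := hinj _ _ (sub_eq_zero.1 h)
    have h1 : (0:ℝ) < ((-k : ℤ) : ℝ) := by push_cast; linarith [hs.1]
    have h2 : ((-k : ℤ) : ℝ) < ((1 : ℤ) : ℝ) := by push_cast; linarith [hs.2]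
    have h1' : 0 < -k := by exact_mod_cast h1
    have h2' : -k < 1 := by exact_mod_cast h2
    omega
  have hsr : s ≠ r := by
    intro h
    have := le_norm_chord hγ hunit hosc u (abs_of_pos hr0).le
    rw [← h, ← hδ, h, abs_of_pos hr0] at this
    linarith
  have hsr' : s ≠ 1 - r := by
    intro h
    have h1 := le_norm_chord hγ hunit hosc u (s := -r) (by rw [abs_neg, abs_of_pos hr0])
    have h2 : γ (u + s) = γ (u + -r) := by
      rw [h, ← hper (u + -r)]; congr 1; ring
    rw [← h2, ← hδ, abs_neg, abs_of_pos hr0] at h1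
    linarith
  have hcrit : (inner ℝ (γ (u + s) - γ u) (deriv γ (u + s)) : ℝ) = 0 := by
    have hd : HasDerivAt (fun t => ‖γ (u + t) - γ u‖ ^ 2)
        (2 * (inner ℝ (γ (u + s) - γ u) (deriv γ (u + s)) : ℝ)) s :=
      ((((hγ.differentiable one_ne_zero) (u + s)).hasDerivAt.comp_const_add u s).sub_const
        (γ u)).norm_sq
    have hloc : IsLocalMin (fun t => ‖γ (u + t) - γ u‖ ^ 2) s := by
      filter_upwards [Icc_mem_nhds (hs.1.lt_of_ne hsr.symm) (hs.2.lt_of_ne hsr')] with t ht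
      exact pow_le_pow_left₀ (norm_nonneg _) (hmin' u t ht) 2
    linarith [hloc.hasDerivAt_eq_zero hd]
  have h := le_of_inner_eq_zero hγ hunit hA hr hosc hδ.symm hδ0 (by linarith) hcrit
  have h' : 4 * B * (2 * δ) ^ α ≤ 4 * B * (2 * δ₀) ^ α := by gcongr
  linarith

end Separation

section Semicontinuity

variable {n : ℕ}

lemma measurable_invR (p q : ℝ) {ψ : ℝ → EuclideanSpace ℝ (Fin n)} (hψ : Continuous ψ) :
    Measurable fun x : (ℝ × ℝ) × ℝ => invR p q (ψ x.1.1) (ψ x.1.2) (ψ x.2) := by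
  have hw : Continuous fun x : (ℝ × ℝ) × ℝ =>
      wedgeNorm (ψ x.1.2 - ψ x.1.1) (ψ x.2 - ψ x.1.1) :=
    continuous_wedgeNorm.comp (f := fun x : (ℝ × ℝ) × ℝ =>
      (ψ x.1.2 - ψ x.1.1, ψ x.2 - ψ x.1.1)) (by fun_prop)
  have hd : Continuous fun x : (ℝ × ℝ) × ℝ =>
      ‖ψ x.1.2 - ψ x.2‖ * ‖ψ x.1.2 - ψ x.1.1‖ * ‖ψ x.2 - ψ x.1.1‖ := by fun_prop
  exact (hw.measurable.pow_const q).div (hd.measurable.pow_const p)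

lemma invR_le_liminf {p q : ℝ} (hp : 0 < p) (hq : 0 < q)
    {x y z : ℕ → EuclideanSpace ℝ (Fin n)} {x₀ y₀ z₀ : EuclideanSpace ℝ (Fin n)}
    (hx : Tendsto x atTop (𝓝 x₀)) (hy : Tendsto y atTop (𝓝 y₀)) (hz : Tendsto z atTop (𝓝 z₀)) :
    ENNReal.ofReal (invR p q x₀ y₀ z₀) ≤
      liminf (fun k => ENNReal.ofReal (invR p q (x k) (y k) (z k))) atTop := by
  by_cases h : ‖y₀ - z₀‖ * ‖y₀ - x₀‖ * ‖z₀ - x₀‖ = 0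
  · rw [invR, h, Real.zero_rpow hp.ne', div_zero, ENNReal.ofReal_zero]
    exact zero_le
  · refine (Tendsto.liminf_eq ?_).ge
    refine ENNReal.tendsto_ofReal (Tendsto.div ?_ ?_ ?_)
    · exact ((continuous_wedgeNorm.tendsto (y₀ - x₀, z₀ - x₀)).comp
        ((hy.sub hx).prodMk_nhds (hz.sub hx))).rpow_const (Or.inr hq.le)
    · exact (((hy.sub hz).norm.mul (hy.sub hx).norm).mul (hz.sub hx).norm).rpow_const
        (Or.inr hp.le)
    · exact (Real.rpow_pos_of_pos (lt_of_le_of_ne (by positivity) (Ne.symm h)) p).ne'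

/-- Fatou's lemma for triple integrals. -/
lemma lintegral_liminf_le_of_measurable_prod (μ : Measure ℝ) [SFinite μ]
    {F : ℕ → (ℝ × ℝ) × ℝ → ℝ≥0∞} (hF : ∀ k, Measurable (F k)) :
    ∫⁻ u₁, ∫⁻ u₂, ∫⁻ u₃, liminf (fun k => F k ((u₁, u₂), u₃)) atTop ∂μ ∂μ ∂μ ≤
      liminf (fun k => ∫⁻ u₁, ∫⁻ u₂, ∫⁻ u₃, F k ((u₁, u₂), u₃) ∂μ ∂μ ∂μ) atTop := by
  have hF₂ := fun k => (hF k).lintegral_prod_right' (ν := μ)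
  have hF₁ := fun k => (hF₂ k).lintegral_prod_right' (ν := μ)
  refine le_trans (lintegral_mono fun u₁ => ?_) (lintegral_liminf_le hF₁)
  refine le_trans (lintegral_mono fun u₂ => ?_)
    (lintegral_liminf_le fun k => (hF₂ k).comp measurable_prodMk_left)
  exact lintegral_liminf_le fun k => (hF k).comp measurable_prodMk_left

/-- The energy of unit speed curves is lower semicontinuous under pointwise convergence. -/
lemma menger_le_of_tendsto {p q : ℝ} (hp : 0 < p) (hq : 0 < q)
    {ψ : ℕ → ℝ → EuclideanSpace ℝ (Fin n)} {γ₀ : ℝ → EuclideanSpace ℝ (Fin n)}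
    (hψ : ∀ k, Continuous (ψ k)) (hunit : ∀ k u, ‖deriv (ψ k) u‖ = 1)
    (hunit₀ : ∀ u, ‖deriv γ₀ u‖ = 1) (hlim : ∀ u, Tendsto (fun k => ψ k u) atTop (𝓝 (γ₀ u)))
    {C : ℝ≥0∞} (hC : ∀ k, menger p q (ψ k) (deriv (ψ k)) ≤ C) :
    menger p q γ₀ (deriv γ₀) ≤ C := by
  simp only [menger, hunit, hunit₀, one_mul] at hC ⊢
  calc _ ≤ ∫⁻ u₁ in Ico (0:ℝ) 1, ∫⁻ u₂ in Ico (0:ℝ) 1, ∫⁻ u₃ in Ico (0:ℝ) 1,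
        liminf (fun k => ENNReal.ofReal (invR p q (ψ k u₁) (ψ k u₂) (ψ k u₃))) atTop :=
        lintegral_mono fun _ => lintegral_mono fun _ => lintegral_mono fun _ =>
          invR_le_liminf hp hq (hlim _) (hlim _) (hlim _)
    _ ≤ _ := lintegral_liminf_le_of_measurable_prod _
        fun k => (measurable_invR p q (hψ k)).ennreal_ofReal
    _ ≤ liminf (fun _ : ℕ => C) atTop := liminf_le_liminf (Eventually.of_forall hC)
    _ = C := liminf_const C

end Semicontinuity

section Compactness

variable {n : ℕ}

/-- A uniformly Hölder continuous sequence of `1`-periodic functions with values in the unit ball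
has a uniformly convergent subsequence. -/
lemma exists_subseq_tendstoUniformly {C α : ℝ} (hα : 0 < α)
    {f : ℕ → ℝ → EuclideanSpace ℝ (Fin n)} (hper : ∀ k, Function.Periodic (f k) 1)
    (hbd : ∀ k u, ‖f k u‖ ≤ 1) (hcont : ∀ k, Continuous (f k))
    (hH : ∀ k u v, ‖f k u - f k v‖ ≤ C * |u - v| ^ α) :
    ∃ (φ : ℕ → ℕ) (g : ℝ → EuclideanSpace ℝ (Fin n)), StrictMono φ ∧
      TendstoUniformly (fun j => f (φ j)) g atTop := by
  let F : ℕ → BoundedContinuousFunction (Icc (0:ℝ) 1) (EuclideanSpace ℝ (Fin n)) := fun k =>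
    BoundedContinuousFunction.mkOfCompact ⟨fun x => f k x, (hcont k).comp continuous_subtype_val⟩
  have hcomp : IsCompact (closure (range F)) := by
    refine BoundedContinuousFunction.arzela_ascoli (Metric.closedBall 0 1)
      (isCompact_closedBall _ _) _ ?_ ?_
    · rintro _ x ⟨k, rfl⟩
      simpa [F] using hbd k x
    · refine Metric.equicontinuous_of_continuity_modulus (fun t => C * t ^ α) ?_ _ ?_
      · have := ((Real.continuousAt_rpow_const 0 α (Or.inr hα.le)).tendsto.const_mul C)
        rwa [Real.zero_rpow hα.ne', mul_zero] at this
      · rintro x y ⟨_, k, rfl⟩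
        have := hH k x y
        rwa [← Real.dist_eq, ← dist_eq_norm] at this
  obtain ⟨G, -, φ, hφ, hG⟩ := hcomp.tendsto_subseq fun k => subset_closure (mem_range_self k)
  refine ⟨φ, fun u => G ⟨Int.fract u, Int.fract_nonneg u, (Int.fract_lt_one u).le⟩, hφ, ?_⟩
  have hunif := BoundedContinuousFunction.tendsto_iff_tendstoUniformly.1 hG
  rw [Metric.tendstoUniformly_iff] at hunif ⊢
  intro ε hε
  filter_upwards [hunif ε hε] with j hj u
  have := hj ⟨Int.fract u, Int.fract_nonneg u, (Int.fract_lt_one u).le⟩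
  rw [eq_fract_of_periodic (hper (φ j)) u]
  exact this

/-- If the derivatives converge uniformly, then so do suitable translates of periodic `C¹` curves,
and the limit may be differentiated. -/
lemma exists_primitive_of_tendstoUniformly {γ : ℕ → ℝ → EuclideanSpace ℝ (Fin n)}
    {g : ℝ → EuclideanSpace ℝ (Fin n)} (hC : ∀ k, ContDiff ℝ 1 (γ k))
    (hper : ∀ k, Function.Periodic (γ k) 1)
    (hg : TendstoUniformly (fun k => deriv (γ k)) g atTop) :
    ∃ γ₀ : ℝ → EuclideanSpace ℝ (Fin n), ContDiff ℝ 1 γ₀ ∧ Function.Periodic γ₀ 1 ∧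
      deriv γ₀ = g ∧ TendstoUniformly (fun k u => γ k u - γ k 0) γ₀ atTop := by
  have hcd : ∀ k, Continuous (deriv (γ k)) := fun k => (hC k).continuous_deriv le_rfl
  have hgc : Continuous g := hg.continuous (Frequently.of_forall hcd)
  set γ₀ : ℝ → EuclideanSpace ℝ (Fin n) := fun u => ∫ t in (0:ℝ)..u, g t with hγ₀
  have hd : ∀ u, HasDerivAt γ₀ (g u) u := fun u =>
    intervalIntegral.integral_hasDerivAt_right (hgc.intervalIntegrable _ _)
      (hgc.stronglyMeasurableAtFilter _ _) hgc.continuousAt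
  have hderiv : deriv γ₀ = g := funext fun u => (hd u).deriv
  have hest : ∀ ε, ∀ k, (∀ t, ‖g t - deriv (γ k) t‖ ≤ ε) →
      ∀ u, ‖γ₀ u - (γ k u - γ k 0)‖ ≤ ε * |u| := by
    intro ε k hk u
    have e : γ k u - γ k 0 = ∫ t in (0:ℝ)..u, deriv (γ k) t :=
      (intervalIntegral.integral_deriv_eq_sub
        (fun t _ => (hC k).differentiable one_ne_zero t)
        ((hcd k).intervalIntegrable _ _)).symm
    rw [e, hγ₀, ← intervalIntegral.integral_sub (hgc.intervalIntegrable _ _)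
      ((hcd k).intervalIntegrable _ _)]
    simpa using intervalIntegral.norm_integral_le_of_norm_le_const
      (a := 0) (b := u) (fun t _ => hk t)
  rw [Metric.tendstoUniformly_iff] at hg
  have hlim : ∀ u, Tendsto (fun k => γ k u - γ k 0) atTop (𝓝 (γ₀ u)) := by
    intro u
    refine Metric.tendsto_nhds.2 fun ε hε => ?_
    filter_upwards [hg (ε / (|u| + 1)) (by positivity)] with k hk
    have h := hest _ k (fun t => by rw [← dist_eq_norm]; exact (hk t).le) u
    rw [dist_comm, dist_eq_norm]
    refine h.trans_lt ?_
    rw [div_mul_eq_mul_div, div_lt_iff₀ (by positivity)]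
    gcongr
    linarith
  have hper₀ : Function.Periodic γ₀ 1 := fun u => by
    have h := hlim (u + 1)
    simp only [(hper _) u] at h
    exact tendsto_nhds_unique h (hlim u)
  refine ⟨γ₀, contDiff_one_iff_deriv.2 ⟨fun u => (hd u).differentiableAt, hderiv ▸ hgc⟩, hper₀,
    hderiv, ?_⟩
  rw [Metric.tendstoUniformly_iff]
  intro ε hε
  filter_upwards [hg (ε / 2) (by positivity)] with k hk u
  have h := hest _ k (fun t => by rw [← dist_eq_norm]; exact (hk t).le) (Int.fract u)
  rw [eq_fract_of_periodic hper₀ u, eq_fract_of_periodic (hper k) u, dist_eq_norm]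
  have hf : |Int.fract u| ≤ 1 := by
    rw [abs_of_nonneg (Int.fract_nonneg u)]; exact (Int.fract_lt_one u).le
  have : ε / 2 * |Int.fract u| ≤ ε / 2 * 1 := by gcongr
  linarith

end Compactness

/-- **Sequential compactness.** In the sub-critical range, for every `M < ∞`
the set `A_M` is sequentially compact in `C¹` up to translations: any
sequence in `A_M` has a subsequence which, after subtracting suitable
translation vectors `b j`, converges in `C¹` to some `γ₀ ∈ A_M`. -/
theorem sequential_compactness (n : ℕ) (p q M : ℝ)
    (hq : 1 < q) (hp₁ : 2/3 * q + 1 < p) (hp₂ : p < q + 2/3)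
    (γ : ℕ → ℝ → EuclideanSpace ℝ (Fin n))
    (hγ : ∀ k, InAM p q M (γ k)) :
    ∃ (φ : ℕ → ℕ) (b : ℕ → EuclideanSpace ℝ (Fin n))
      (γ₀ : ℝ → EuclideanSpace ℝ (Fin n)),
      StrictMono φ ∧ InAM p q M γ₀ ∧
      ∀ ε : ℝ, 0 < ε → ∃ N : ℕ, ∀ j ≥ N, ∀ u : ℝ,
        ‖γ (φ j) u - b j - γ₀ u‖ ≤ ε ∧
        ‖deriv (γ (φ j)) u - deriv γ₀ u‖ ≤ ε := by
  have hp0 : 0 < p := by linarith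
  have hq0 : 0 < q := by linarith
  obtain ⟨B, α, hB, hα, hBα⟩ := exists_areaBound (n := n) M hq hp₁
  obtain ⟨r, C, hr0, hr, hC, hHolder⟩ := exists_holder_deriv (n := n) hB hα
  obtain ⟨δ₀, hδ₀, hsep⟩ := exists_separation (n := n) hB hα hr0 hr
  have hCD := fun k => (hγ k).1
  have hper := fun k => (hγ k).2.1
  have hinj := fun k => (hγ k).2.2.1
  have hunit := fun k => (hγ k).2.2.2.1
  have hE := fun k => (hγ k).2.2.2.2
  have hHol := fun k => hHolder (γ k) (hCD k) (hper k) (hunit k) (hBα _ (hγ k))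
  have hosc := fun k u s hs => (hHol k u s hs).2
  have hglobal : ∀ k u v, ‖deriv (γ k) u - deriv (γ k) v‖ ≤ (C + 2 / r ^ α) * |u - v| ^ α := by
    intro k u v
    rcases le_or_gt |u - v| r with h | h
    · have h1 := (hHol k v (u - v) h).1
      rw [add_sub_cancel] at h1
      refine h1.trans ?_
      gcongr
      exact le_add_of_nonneg_right (by positivity)
    · calc ‖deriv (γ k) u - deriv (γ k) v‖ ≤ ‖deriv (γ k) u‖ + ‖deriv (γ k) v‖ := norm_sub_le _ _
        _ = 2 / r ^ α * r ^ α := by rw [hunit, hunit]; field_simp; norm_num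
        _ ≤ (C + 2 / r ^ α) * |u - v| ^ α := by
          gcongr
          exact le_add_of_nonneg_left hC.le
  obtain ⟨φ, g, hφ, hg⟩ := exists_subseq_tendstoUniformly hα (fun k => periodic_deriv (hper k))
    (fun k u => (hunit k u).le) (fun k => (hCD k).continuous_deriv le_rfl) hglobal
  obtain ⟨γ₀, hCD₀, hper₀, hderiv₀, hlim⟩ := exists_primitive_of_tendstoUniformly
    (fun j => hCD (φ j)) (fun j => hper (φ j)) hg
  have hunit₀ : ∀ u, ‖deriv γ₀ u‖ = 1 := fun u => by
    rw [hderiv₀]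
    have h := (hg.tendsto_at u).norm
    simp only [hunit] at h
    exact tendsto_nhds_unique h tendsto_const_nhds
  refine ⟨φ, fun j => γ (φ j) 0, γ₀, hφ, ⟨hCD₀, hper₀, ?_, hunit₀, ?_⟩, ?_⟩
  · intro u v huv
    refine ⟨⌊v - u⌋, ?_⟩
    set s := Int.fract (v - u) with hs
    have hv : γ₀ v = γ₀ (u + s) := by
      have h := hper₀.int_mul ⌊v - u⌋ (u + s)
      rw [mul_one, hs, add_assoc, Int.fract_add_floor, add_sub_cancel] at h
      rw [hs, h]
    have hs0 : 0 ≤ s := Int.fract_nonneg _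
    have hs1 : s < 1 := Int.fract_lt_one _
    rcases hs0.eq_or_lt with h0 | h0
    · linarith [Int.fract_add_floor (v - u)]
    exfalso
    have hlb : ∀ k, min δ₀ (min (7 / 8 * s) (7 / 8 * (1 - s))) ≤ ‖γ k (u + s) - γ k u‖ := by
      intro k
      rcases le_or_gt s r with h | h
      · have h1 := le_norm_chord (hCD k) (hunit k) (hosc k) u (s := s) (by rwa [abs_of_pos h0])
        rw [abs_of_pos h0] at h1
        exact ((min_le_right _ _).trans (min_le_left _ _)).trans h1
      rcases le_or_gt s (1 - r) with h' | h'
      · exact (min_le_left _ _).trans (hsep (γ k) (hCD k) (hper k) (hinj k) (hunit k)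
          (hBα _ (hγ k)) (hosc k) u s h.le h')
      · have ha : |s - 1| = 1 - s := by rw [abs_of_neg (by linarith)]; ring
        have h1 := le_norm_chord (hCD k) (hunit k) (hosc k) u (s := s - 1)
          (by rw [ha]; linarith)
        rw [ha, ← hper k (u + (s - 1)), show u + (s - 1) + 1 = u + s by ring] at h1
        exact ((min_le_right _ _).trans (min_le_right _ _)).trans h1
    have hpos : 0 < min δ₀ (min (7 / 8 * s) (7 / 8 * (1 - s))) :=
      lt_min hδ₀ (lt_min (by positivity) (by linarith))
    have ht := ((hlim.tendsto_at (u + s)).sub (hlim.tendsto_at u)).norm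
    simp only [sub_sub_sub_cancel_right] at ht
    have := ge_of_tendsto' ht fun j => hlb (φ j)
    rw [← hv, huv, sub_self, norm_zero] at this
    linarith
  · refine menger_le_of_tendsto hp0 hq0 (ψ := fun j u => γ (φ j) u - γ (φ j) 0)
      (fun j => (hCD (φ j)).continuous.sub continuous_const) (fun j u => ?_) hunit₀
      hlim.tendsto_at (fun j => ?_)
    · rw [deriv_sub_const, hunit]
    · refine le_trans (le_of_eq ?_) (hE (φ j))
      simp only [menger, invR, sub_sub_sub_cancel_right, deriv_sub_const_fun]
  · intro ε hε
    rw [Metric.tendstoUniformly_iff] at hlim hg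
    obtain ⟨N, hN⟩ := eventually_atTop.1 ((hlim ε hε).and (hg ε hε))
    refine ⟨N, fun j hj u => ⟨?_, ?_⟩⟩
    · rw [← dist_eq_norm, dist_comm]
      exact ((hN j hj).1 u).le
    · rw [hderiv₀, ← dist_eq_norm, dist_comm]
      exact ((hN j hj).2 u).le
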